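/- Let $\Gamma$ be a $(Y,Y')$-distance-biregular graph with $D \ge 3$. If there exists an integer $j$ with $2 \le j \le \min\{D-1, D'-1\}$ such that $c_i = 1$ for all $1 \le i \le j$, then $c'_i = 1$ for all $1 \le i \le j$. -/

import Mathlib

open SimpleGraph Set

/-- A `(Y,Y')`-distance-biregular graph: a finite connected bipartite graph in which
every vertex is distance-regularized, and vertices in the same color class share the
same intersection numbers (`c`, `b` for class `Y` and `c'`, `b'` for class `Y'`),
while the two color classes have different intersection arrays.
`D` (resp. `D'`) is the common eccentricity of vertices in `Y` (resp. `Y'`). -/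
structure DBRG (V : Type) [Fintype V] where
  G : SimpleGraph V
  conn : G.Connected
  Y : Finset V
  Y' : Finset V
  Yne : Y.Nonempty
  Y'ne : Y'.Nonempty
  cover : ∀ v, v ∈ Y ∨ v ∈ Y'
  disj : ∀ v, ¬(v ∈ Y ∧ v ∈ Y')
  bip : ∀ u v, G.Adj u v → (u ∈ Y ↔ v ∈ Y')
  D : ℕ
  D' : ℕ
  eccY : ∀ x ∈ Y, (∃ y, G.dist x y = D) ∧ ∀ y, G.dist x y ≤ D
  eccY' : ∀ x ∈ Y', (∃ y, G.dist x y = D') ∧ ∀ y, G.dist x y ≤ D'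
  c : ℕ → ℕ
  b : ℕ → ℕ
  c' : ℕ → ℕ
  b' : ℕ → ℕ
  hc : ∀ i, 1 ≤ i → ∀ x ∈ Y, ∀ z, G.dist x z = i →
    {w | G.Adj z w ∧ G.dist x w = i - 1}.ncard = c i
  hb : ∀ i, ∀ x ∈ Y, ∀ z, G.dist x z = i →
    {w | G.Adj z w ∧ G.dist x w = i + 1}.ncard = b i
  hc' : ∀ i, 1 ≤ i → ∀ x ∈ Y', ∀ z, G.dist x z = i →
    {w | G.Adj z w ∧ G.dist x w = i - 1}.ncard = c' i
  hb' : ∀ i, ∀ x ∈ Y', ∀ z, G.dist x z = i →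
    {w | G.Adj z w ∧ G.dist x w = i + 1}.ncard = b' i
  c0 : c 0 = 0
  c'0 : c' 0 = 0
  nonreg : ¬ (∀ i, c i = c' i ∧ b i = b' i)

/-- `Γ` is `2`-`Y`-homogeneous with parameters `γ i`: for all `1 ≤ i ≤ D - 1` and all
`x ∈ Y`, `y ∈ Γ₂(x)`, `z ∈ Γ_{i,i}(x,y)`, the number of common neighbours of `x` and `y`
at distance `i - 1` from `z` equals `γ i` (independently of `x`, `y`, `z`). -/
def DBRG.TwoYHom {V : Type} [Fintype V] (Γ : DBRG V) (γ : ℕ → ℕ) : Prop :=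
  ∀ i, 1 ≤ i → i ≤ Γ.D - 1 → ∀ x ∈ Γ.Y, ∀ y, Γ.G.dist x y = 2 →
    ∀ z, Γ.G.dist x z = i → Γ.G.dist y z = i →
      {w | Γ.G.dist z w = i - 1 ∧ Γ.G.Adj x w ∧ Γ.G.Adj y w}.ncard = γ i

/-!
Fix `x ∈ Y'` and `z` at distance `i` from `x`, and let `w`, `w'` be neighbours of `z` one step
closer to `x`. Start a geodesic from `x` to `w'` with a vertex `q ∈ Y`, so that `d(q, z) = i - 1`.
As the graph is bipartite, `d(q, w)` is `i - 2` or `i`. In the first case `w` and `w'` are both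
neighbours of `z` one step closer to `q`, so `c_{i-1} = 1` gives `w = w'`. In the second case `z` is
a neighbour of `w` one step closer to `q`, and so is any neighbour `p` of `w` one step closer to
`x`; now `c_i = 1` gives `p = z`, which is absurd since `d(x, p) = i - 2`.
-/

/-- The neighbours of `z` one step closer to `x`, that is `Γ(z) ∩ Γ_{i-1}(x)` for `i = d(x, z)`.
In a distance-biregular graph there are `c_i` or `c'_i` of them, according to the color of `x`. The
distance condition is written without subtraction, so that the set is empty when `z = x`. -/
def closerNeighborSet {V : Type*} (G : SimpleGraph V) (x z : V) : Set V :=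
  {w | G.Adj z w ∧ G.dist x w + 1 = G.dist x z}

section Graph

variable {V : Type*} {G : SimpleGraph V} {p q w x y z : V}

theorem closerNeighborSet_nonempty (hxz : G.dist x z ≠ 0) :
    (closerNeighborSet G x z).Nonempty := by
  obtain ⟨p, hp⟩ := exists_walk_of_dist_ne_zero hxz
  have hnil : ¬ p.Nil := Walk.not_nil_of_ne (dist_ne_zero_iff_ne_and_reachable.1 hxz).1
  have hprefix : p.dropLast.length = G.dist x p.penultimate :=
    length_eq_dist_of_subwalk hp (p.isSubwalk_take _)
  refine ⟨p.penultimate, (p.adj_penultimate hnil).symm, ?_⟩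
  rw [← hprefix, ← hp, Walk.length_dropLast_add_one hnil]

theorem exists_adj_dist_add_one_eq (hxz : G.dist x z ≠ 0) :
    ∃ q, G.Adj x q ∧ G.dist q z + 1 = G.dist x z := by
  rw [dist_comm] at hxz
  obtain ⟨q, hxq, hzq⟩ := closerNeighborSet_nonempty hxz
  exact ⟨q, hxq, by rwa [G.dist_comm, G.dist_comm (u := x)]⟩

theorem exists_dist_eq_of_le_dist (hr : G.Reachable x y) {i : ℕ} (hi : i ≤ G.dist x y) :
    ∃ z, G.dist x z = i := by
  obtain ⟨p, hp⟩ := hr.exists_walk_length_eq_dist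
  refine ⟨p.getVert i, ?_⟩
  rw [← length_eq_dist_of_subwalk hp (p.isSubwalk_take i), Walk.take_length, hp, min_eq_left hi]

theorem dist_ne_dist_of_adj (hbip : G.IsBipartite) (hr : G.Reachable x z) (hzw : G.Adj z w) :
    G.dist x z ≠ G.dist x w := by
  intro heq
  obtain ⟨p, hp⟩ := hr.exists_walk_length_eq_dist
  obtain ⟨q, hq⟩ := (hr.trans hzw.reachable).symm.exists_walk_length_eq_dist
  have heven : Even (p.append (Walk.cons hzw q)).length :=
    two_colorable_iff_forall_loop_even.1 hbip x _
  rw [Walk.length_append, Walk.length_cons, hp, hq, G.dist_comm (u := w), heq] at heven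
  grind

theorem dist_eq_add_one_or_add_one_eq_of_adj (hbip : G.IsBipartite) (hr : G.Reachable x z)
    (hzw : G.Adj z w) : G.dist x w = G.dist x z + 1 ∨ G.dist x w + 1 = G.dist x z := by
  have hne := dist_ne_dist_of_adj hbip hr hzw
  have hdiff := hzw.diff_dist_adj (u := x)
  omega

theorem eq_of_mem_closerNeighborSet_of_dist_eq_one (hxz : G.dist x z = 1)
    (hw : w ∈ closerNeighborSet G x z) : x = w := by
  have hr : G.Reachable x w := (dist_eq_one_iff_adj.1 hxz).reachable.trans hw.1.reachable
  exact hr.dist_eq_zero_iff.1 (Nat.succ_injective (hw.2.trans hxz))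

theorem dist_add_one_eq_of_mem_closerNeighborSet (hxq : G.Adj x q)
    (hqw : G.dist q w + 1 = G.dist x w) (hw : w ∈ closerNeighborSet G x z) :
    G.dist q z + 1 = G.dist x z := by
  obtain ⟨hzw, hxw⟩ := hw
  have hxq1 : G.dist x q = 1 := dist_eq_one_iff_adj.2 hxq
  have hwz1 : G.dist w z = 1 := dist_eq_one_iff_adj.2 hzw.symm
  have hxqz := hxq.reachable.dist_triangle_left z
  have hqwz := hzw.symm.reachable.dist_triangle_right q
  omega

theorem mem_closerNeighborSet_of_adj_of_dist_eq_add_one (hxq : G.Adj x q)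
    (hqw : G.dist q w = G.dist x w + 1) (hp : p ∈ closerNeighborSet G x w) :
    p ∈ closerNeighborSet G q w := by
  obtain ⟨hwp, hxp⟩ := hp
  have hqx1 : G.dist q x = 1 := dist_eq_one_iff_adj.2 hxq.symm
  have hpw1 : G.dist p w = 1 := dist_eq_one_iff_adj.2 hwp.symm
  have hqxp := hxq.symm.reachable.dist_triangle_left p
  have hqpw := hwp.symm.reachable.dist_triangle_right q
  exact ⟨hwp, by omega⟩

theorem closerNeighborSet_subsingleton_of_forall_adj (hbip : G.IsBipartite)
    (hadj : ∀ q, G.Adj x q → ∀ u, G.dist q u ≤ G.dist x z →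
      (closerNeighborSet G q u).Subsingleton) :
    (closerNeighborSet G x z).Subsingleton := by
  intro w hw w' hw'
  have hxw : G.dist x w + 1 = G.dist x z := hw.2
  have hxw' : G.dist x w' + 1 = G.dist x z := hw'.2
  by_cases hxz : G.dist x z = 1
  · rw [← eq_of_mem_closerNeighborSet_of_dist_eq_one hxz hw,
      ← eq_of_mem_closerNeighborSet_of_dist_eq_one hxz hw']
  obtain ⟨q, hxq, hqw'⟩ : ∃ q, G.Adj x q ∧ G.dist q w' + 1 = G.dist x w' :=
    exists_adj_dist_add_one_eq (by omega)
  have hqz : G.dist q z + 1 = G.dist x z := dist_add_one_eq_of_mem_closerNeighborSet hxq hqw' hw'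
  have hr : G.Reachable q z := Reachable.of_dist_ne_zero (by omega)
  obtain hqw | hqw := dist_eq_add_one_or_add_one_eq_of_adj hbip hr hw.1
  · exfalso
    obtain ⟨p, hp⟩ : (closerNeighborSet G x w).Nonempty := closerNeighborSet_nonempty (by omega)
    have hxp : G.dist x p + 1 = G.dist x w := hp.2
    have hpq : p ∈ closerNeighborSet G q w :=
      mem_closerNeighborSet_of_adj_of_dist_eq_add_one hxq (by omega) hp
    have hzq : z ∈ closerNeighborSet G q w := ⟨hw.1.symm, hqw.symm⟩
    have hpz : p = z := hadj q hxq w (by omega) hpq hzq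
    rw [hpz] at hxp
    omega
  · have hwq : w ∈ closerNeighborSet G q z := ⟨hw.1, hqw⟩
    have hwq' : w' ∈ closerNeighborSet G q z := ⟨hw'.1, by omega⟩
    exact hadj q hxq z (by omega) hwq hwq'

end Graph

namespace DBRG

variable {V : Type} [Fintype V] (Γ : DBRG V)

theorem isBipartiteWith : Γ.G.IsBipartiteWith Γ.Y Γ.Y' where
  disjoint := by
    rw [Finset.disjoint_coe, Finset.disjoint_left]
    exact fun v hY hY' ↦ Γ.disj v ⟨hY, hY'⟩
  mem_of_adj u v huv := by
    have := Γ.bip u v huv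
    have := Γ.bip v u huv.symm
    have := Γ.cover u
    grind

theorem ncard_closerNeighborSet {x : V} (hx : x ∈ Γ.Y) (z : V) :
    (closerNeighborSet Γ.G x z).ncard = Γ.c (Γ.G.dist x z) := by
  obtain hxz | hxz := (Γ.G.dist x z).eq_zero_or_pos
  · simp [closerNeighborSet, hxz, Γ.c0]
  · have hiff (w : V) : Γ.G.dist x w + 1 = Γ.G.dist x z ↔ Γ.G.dist x w = Γ.G.dist x z - 1 := by
      omega
    simp only [closerNeighborSet, hiff, Γ.hc _ hxz x hx z rfl]

theorem ncard_closerNeighborSet' {x : V} (hx : x ∈ Γ.Y') (z : V) :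
    (closerNeighborSet Γ.G x z).ncard = Γ.c' (Γ.G.dist x z) := by
  obtain hxz | hxz := (Γ.G.dist x z).eq_zero_or_pos
  · simp [closerNeighborSet, hxz, Γ.c'0]
  · have hiff (w : V) : Γ.G.dist x w + 1 = Γ.G.dist x z ↔ Γ.G.dist x w = Γ.G.dist x z - 1 := by
      omega
    simp only [closerNeighborSet, hiff, Γ.hc' _ hxz x hx z rfl]

end DBRG

theorem stmt_4 {V : Type} [Fintype V] (Γ : DBRG V) (hD : 3 ≤ Γ.D)
    (j : ℕ) (hj1 : 2 ≤ j) (hj2 : j ≤ min (Γ.D - 1) (Γ.D' - 1))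
    (hc : ∀ i, 1 ≤ i → i ≤ j → Γ.c i = 1) :
    ∀ i, 1 ≤ i → i ≤ j → Γ.c' i = 1 := by
  intro i hi hij
  obtain ⟨x, hx⟩ := Γ.Y'ne
  obtain ⟨y, hy⟩ := (Γ.eccY' x hx).1
  obtain ⟨z, rfl⟩ : ∃ z, Γ.G.dist x z = i :=
    exists_dist_eq_of_le_dist (Γ.conn x y) (by omega)
  have hnonempty : (closerNeighborSet Γ.G x z).Nonempty :=
    closerNeighborSet_nonempty (by omega)
  have hunique : (closerNeighborSet Γ.G x z).Subsingleton := by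
    refine closerNeighborSet_subsingleton_of_forall_adj Γ.isBipartiteWith.isBipartite
      fun q hxq u hqu ↦ ?_
    have hq : q ∈ Γ.Y := (Γ.bip q x hxq.symm).2 hx
    rw [← Set.ncard_le_one_iff_subsingleton, Γ.ncard_closerNeighborSet hq]
    obtain h | h := (Γ.G.dist q u).eq_zero_or_pos
    · simp [h, Γ.c0]
    · exact (hc _ h (hqu.trans hij)).le
  rw [← Γ.ncard_closerNeighborSet' hx, Set.ncard_eq_one,
    Set.exists_eq_singleton_iff_nonempty_subsingleton]
  exact ⟨hnonempty, hunique⟩
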